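/- (Asymptotic uniqueness of the ς-reduced representative along rays of direction (a11,a21).) Assume 0 ≤ a11 < a21, 0 ≤ a12 < a32, 0 ≤ a22 < a32, and fix integers m, n. Suppose that for every integer t ≥ 0 the matrix H(m+a11·t, n+a21·t) has characteristic polynomial irreducible over ℚ and has a non-real complex eigenvalue. Then there exists T such that for every integer t > T any two ς-reduced matrices integer conjugate to H(m+a11·t, n+a21·t) are equal; i.e., H(m+a11·t, n+a21·t) has exactly one integer conjugate ς-reduced matrix. -/

import Mathlib

/-- 3×3 integer matrices. -/
abbrev M3 : Type := Matrix (Fin 3) (Fin 3) ℤ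

/-- Hessenberg complexity ς(M) = a21² · a32. -/
def HessComplexity (M : M3) : ℤ := (M 1 0) ^ 2 * (M 2 1)

/-- A perfect (upper) Hessenberg matrix: a31 = 0, 0 ≤ a11 < a21, 0 ≤ a12 < a32,
0 ≤ a22 < a32. -/
def IsPerfectHessenberg (M : M3) : Prop :=
  M 2 0 = 0 ∧
  0 ≤ M 0 0 ∧ M 0 0 < M 1 0 ∧
  0 ≤ M 0 1 ∧ M 0 1 < M 2 1 ∧
  0 ≤ M 1 1 ∧ M 1 1 < M 2 1

/-- M₂ = X · M₁ · X⁻¹ for some X ∈ GL(3,ℤ). -/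
def IntegerConjugate (M₁ M₂ : M3) : Prop :=
  ∃ X : M3, (X.det = 1 ∨ X.det = -1) ∧ M₂ = X * M₁ * X⁻¹

/-- A ς-reduced matrix: a perfect Hessenberg SL(3,ℤ)-matrix whose Hessenberg
complexity is minimal in its integer conjugacy class. -/
def SigmaReduced (M : M3) : Prop :=
  M.det = 1 ∧ IsPerfectHessenberg M ∧
  ∀ M' : M3, M'.det = 1 → IsPerfectHessenberg M' → IntegerConjugate M M' →
    HessComplexity M ≤ HessComplexity M'

/-- The family H(m,n) of matrices of Hessenberg type ⟨a11,a21|a12,a22,a32⟩. -/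
def Hmat (a11 a12 a13 a21 a22 a23 a32 a33 m n : ℤ) : M3 :=
  !![a11, a12, a11 * m + a12 * n + a13;
     a21, a22, a21 * m + a22 * n + a23;
     0,   a32, a32 * n + a33]

/-- The companion matrix of `X³ - N X² - y X - 1`. -/
def companionMat (N y : ℤ) : M3 := !![0, 0, 1; 1, 0, y; 0, 1, N]

/-- The norm of `a + b λ + c λ²`, where `λ` is a root of `X³ - N X² - y X - 1`. -/
def normForm (N y a b c : ℤ) : ℤ :=
  a ^ 3 + a ^ 2 * b * N + a ^ 2 * c * (N ^ 2 + 2 * y) - y * a * b ^ 2 - a * b * c * (N * y + 3)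
    + a * c ^ 2 * (y ^ 2 - 2 * N) + b ^ 3 + b ^ 2 * c * N - y * b * c ^ 2 + c ^ 3

/-- The matrix with columns `v`, `A v`, `A² v`. -/
def krylov (A : M3) (v : Fin 3 → ℤ) : M3 := Matrix.of fun i j => ((A ^ (j : ℕ)).mulVec v) i

theorem krylov_mulVec {A M P : M3} (h : A * P = P * M) (v : Fin 3 → ℤ) :
    krylov A (P.mulVec v) = P * krylov M v := by
  have hpow (k : ℕ) : A ^ k * P = P * M ^ k :=
    ((show SemiconjBy P M A from h.symm).pow_right k).symm
  ext i j
  change ((A ^ (j : ℕ)).mulVec (P.mulVec v)) i = (P.mulVec ((M ^ (j : ℕ)).mulVec v)) i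
  rw [Matrix.mulVec_mulVec, Matrix.mulVec_mulVec, hpow]

theorem det_krylov_companionMat (N y : ℤ) (g : Fin 3 → ℤ) :
    (krylov (companionMat N y) g).det = normForm N y (g 0) (g 1) (g 2) := by
  simp [Matrix.det_fin_three, krylov, companionMat, normForm, pow_two, Matrix.mulVec, dotProduct,
    Fin.sum_univ_three, Matrix.mul_apply]
  ring

theorem det_krylov_of_hessenberg {M : M3} (h : M 2 0 = 0) :
    (krylov M ![1, 0, 0]).det = HessComplexity M := by
  simp [Matrix.det_fin_three, krylov, HessComplexity, pow_two, Matrix.mulVec, dotProduct,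
    Fin.sum_univ_three, Matrix.mul_apply, h]
  ring

theorem normForm_eq_det_mul_hessComplexity {M P : M3} {N y : ℤ} (h20 : M 2 0 = 0)
    (h : companionMat N y * P = P * M) :
    normForm N y (P 0 0) (P 1 0) (P 2 0) = P.det * HessComplexity M := by
  rw [← det_krylov_of_hessenberg h20, ← Matrix.det_mul, ← krylov_mulVec h,
    det_krylov_companionMat]
  simp [Matrix.mulVec, dotProduct, Fin.sum_univ_three]

/-- The norm form splits into the real linear factor and the quadratic factor of the pair of
complex roots; here `s` is the sum of these two roots and `q` their product. -/
theorem normForm_eq_mul {N y : ℤ} {r s q : ℝ} (hN : (N : ℝ) = r + s) (hq : q * r = 1)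
    (hy : -(y : ℝ) = r * s + q) (a b c : ℤ) :
    (normForm N y a b c : ℝ) = (a + b * r + c * r ^ 2) *
      ((a - c * q) ^ 2 + (a - c * q) * (b + c * s) * s + (b + c * s) ^ 2 * q) := by
  have hy' : (y : ℝ) = -(r * s + q) := by linarith
  unfold normForm
  push_cast
  rw [hN, hy']
  linear_combination (3 * a * b * c + 2 * a * c ^ 2 * (r + s) - b ^ 3 - b ^ 2 * c * (r + s)
    - b * c ^ 2 * (r * s + q) - c ^ 3 * (q * r + 1)) * hq

theorem exists_real_root {N y : ℤ} (hN : 2 * (|y| + 1) ≤ N) :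
    ∃ r : ℝ, (N : ℝ) - (|y| + 1) ≤ r ∧ r ≤ N + (|y| + 1) ∧ r ^ 3 = N * r ^ 2 + y * r + 1 := by
  have hN' : 2 * (|(y : ℝ)| + 1) ≤ N := by exact_mod_cast hN
  have h1 := neg_abs_le (y : ℝ)
  have h2 := le_abs_self (y : ℝ)
  have h0 := abs_nonneg (y : ℝ)
  push_cast
  set K : ℝ := |(y : ℝ)| + 1 with hK
  have hcont : ContinuousOn (fun x : ℝ => x ^ 3 - N * x ^ 2 - y * x - 1)
      (Set.Icc ((N : ℝ) - K) (N + K)) := by fun_prop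
  have hmem : (0 : ℝ) ∈ Set.Icc ((fun x : ℝ => x ^ 3 - N * x ^ 2 - y * x - 1) ((N : ℝ) - K))
      ((fun x : ℝ => x ^ 3 - N * x ^ 2 - y * x - 1) ((N : ℝ) + K)) := by
    constructor
    · have hx : K ≤ (N : ℝ) - K := by linarith
      have e : ((N : ℝ) - K) ^ 3 - N * ((N : ℝ) - K) ^ 2 - y * ((N : ℝ) - K) - 1
        = -(((N : ℝ) - K) * (((N : ℝ) - K) * K + y)) - 1 := by ring
      have : 0 ≤ ((N : ℝ) - K) * (((N : ℝ) - K) * K + y) :=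
        mul_nonneg (by linarith) (by nlinarith)
      simp only [e]
      linarith
    · have hx : 3 * K ≤ (N : ℝ) + K := by linarith
      have e : ((N : ℝ) + K) ^ 3 - N * ((N : ℝ) + K) ^ 2 - y * ((N : ℝ) + K) - 1
        = ((N : ℝ) + K) * (((N : ℝ) + K) * K - y) - 1 := by ring
      have : 1 * 1 ≤ ((N : ℝ) + K) * (((N : ℝ) + K) * K - y) :=
        mul_le_mul (by linarith) (by nlinarith) (by norm_num) (by linarith)
      simp only [e]
      linarith
  obtain ⟨r, hr, hr0⟩ := intermediate_value_Icc (by linarith) hcont hmem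
  exact ⟨r, hr.1, hr.2, by simp only at hr0; linarith⟩

set_option maxHeartbeats 1000000 in
/-- Integers `a`, `b`, `c` for which `a + b λ + c λ²` has bounded norm, normalised by a power of the
unit `λ`, are supported on `1` or on `λ` as soon as the trace `N` is large. -/
theorem coords_of_normForm_le {N y d : ℤ} {r : ℝ} (hd : 1 ≤ d)
    (hroot : r ^ 3 = N * r ^ 2 + y * r + 1) (hrN : (N : ℝ) - (|y| + 1) ≤ r)
    (hN : 200 * d ^ 3 * (|y| + 1) ^ 2 ≤ N) {a b c : ℤ}
    (hnorm : |normForm N y a b c| ≤ d ^ 3)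
    (hlow : (d : ℝ) ≤ |a + b * r + c * r ^ 2|) (hup : |a + b * r + c * r ^ 2| ≤ d * r) :
    c = 0 ∧ (a = 0 ∨ b = 0) := by
  have hd' : (1 : ℝ) ≤ d := by exact_mod_cast hd
  have hN' : 200 * (d : ℝ) ^ 3 * (|(y : ℝ)| + 1) ^ 2 ≤ N := by exact_mod_cast hN
  have hnorm' : |(normForm N y a b c : ℝ)| ≤ (d : ℝ) ^ 3 := by exact_mod_cast hnorm
  have hy1 := neg_abs_le (y : ℝ)
  have hy2 := le_abs_self (y : ℝ)
  have hy0 := abs_nonneg (y : ℝ)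
  push_cast at hrN
  set K : ℝ := |(y : ℝ)| + 1 with hK
  have hK1 : 1 ≤ K := by linarith
  have hKK : K ≤ K ^ 2 := by nlinarith
  have hd2 : (d : ℝ) ≤ d ^ 2 := by nlinarith
  have hd3 : (d : ℝ) ^ 2 ≤ d ^ 3 := by nlinarith
  have hdK : K ^ 2 ≤ (d : ℝ) ^ 3 * K ^ 2 := by nlinarith
  have hdK' : (d : ℝ) ^ 3 ≤ d ^ 3 * K ^ 2 := by nlinarith
  have hrK : 199 * K ^ 2 ≤ r := by linarith
  have hrd : 199 * (d : ℝ) ^ 2 ≤ r := by linarith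
  have hr0 : 0 < r := by linarith
  obtain ⟨q, hq⟩ : ∃ q : ℝ, q * r = 1 := ⟨r⁻¹, inv_mul_cancel₀ hr0.ne'⟩
  have hq0 : 0 < q := by
    by_contra hcon
    nlinarith
  obtain ⟨s, hs⟩ : ∃ s : ℝ, (N : ℝ) = r + s := ⟨N - r, by ring⟩
  have hys : -(y : ℝ) = r * s + q := by
    have : r ^ 2 * s = -(y * r) - 1 := by
      linear_combination -hroot - r ^ 2 * hs
    linear_combination (-q) * this + (y + r * s) * hq
  have hq1 : q ≤ 1 := by nlinarith
  have hsK : |r * s| ≤ K := abs_le.mpr ⟨by linarith, by linarith⟩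
  have hs2 : s ^ 2 ≤ q := by
    have h1 : (r * s) ^ 2 ≤ K ^ 2 := sq_le_sq' (abs_le.mp hsK).1 (abs_le.mp hsK).2
    have h2 : s ^ 2 = q ^ 2 * (r * s) ^ 2 := by
      linear_combination (-s ^ 2) * (q * r + 1) * hq
    have h3 : q = q ^ 2 * r := by linear_combination (-q) * hq
    rw [h2]
    calc q ^ 2 * (r * s) ^ 2 ≤ q ^ 2 * r :=
          mul_le_mul_of_nonneg_left (by linarith) (sq_nonneg q)
      _ = q := h3.symm
  have hprod := normForm_eq_mul hs hq hys a b c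
  set ℓ : ℝ := a + b * r + c * r ^ 2 with hℓ
  obtain ⟨u, hu⟩ : ∃ u : ℝ, u = a - c * q := ⟨_, rfl⟩
  obtain ⟨w, hw⟩ : ∃ w : ℝ, w = b + c * s := ⟨_, rfl⟩
  rw [← hu, ← hw] at hprod
  have hQ : (u ^ 2 + w ^ 2 * q) / 2 ≤ u ^ 2 + u * w * s + w ^ 2 * q := by
    nlinarith [sq_nonneg (u + w * s), mul_nonneg (sq_nonneg w) (sub_nonneg.mpr hs2)]
  have hwq0 : 0 ≤ w ^ 2 * q := by positivity
  have hQd : u ^ 2 + u * w * s + w ^ 2 * q ≤ d ^ 2 := by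
    have hQ0 : 0 ≤ u ^ 2 + u * w * s + w ^ 2 * q := by nlinarith [sq_nonneg u]
    rw [hprod, abs_mul, abs_of_nonneg hQ0] at hnorm'
    have : d * (u ^ 2 + u * w * s + w ^ 2 * q) ≤ d * (d : ℝ) ^ 2 := by
      calc d * (u ^ 2 + u * w * s + w ^ 2 * q) ≤ |ℓ| * (u ^ 2 + u * w * s + w ^ 2 * q) :=
            mul_le_mul_of_nonneg_right hlow hQ0
        _ ≤ d * (d : ℝ) ^ 2 := by linarith
    exact le_of_mul_le_mul_left this (by linarith)
  have hu2 : |u| ≤ 2 * d := abs_le_of_sq_le_sq (by nlinarith) (by linarith)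
  have hw2 : w ^ 2 ≤ 2 * d ^ 2 * r := by
    have h1 : w ^ 2 * q ≤ 2 * d ^ 2 := by nlinarith [sq_nonneg u]
    have h2 : w ^ 2 = w ^ 2 * q * r := by linear_combination (-w ^ 2) * hq
    rw [h2]
    exact mul_le_mul_of_nonneg_right h1 hr0.le
  have hc : c = 0 := by
    by_contra hc0
    have hc1 : (1 : ℝ) ≤ |(c : ℝ)| := by exact_mod_cast Int.one_le_abs hc0
    have hceq : c * (r ^ 2 - r * s + q) = ℓ - u - r * w := by
      rw [hℓ, hu, hw]; ring
    have hfac : r ^ 2 - K ≤ |r ^ 2 - r * s + q| :=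
      le_trans (by linarith [(abs_le.mp hsK).2]) (le_abs_self _)
    have hrKpos : 0 ≤ r ^ 2 - K := by nlinarith
    have h1 : r ^ 2 - K ≤ |ℓ - u - r * w| := by
      rw [← hceq, abs_mul]
      nlinarith [abs_nonneg (r ^ 2 - r * s + q)]
    have h2 : |ℓ - u - r * w| ≤ d * r + 2 * d + r * |w| := by
      calc |ℓ - u - r * w| ≤ |ℓ| + |u| + |r * w| :=
            (abs_sub _ _).trans (add_le_add_left (abs_sub _ _) _)
        _ = |ℓ| + |u| + r * |w| := by rw [abs_mul, abs_of_pos hr0]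
        _ ≤ _ := by linarith
    have h3 : r ^ 2 ≤ r * (|w| + d + 3) := by nlinarith
    have h4 : r / 2 ≤ |w| := by
      have := le_of_mul_le_mul_left (by linarith : r * r ≤ r * (|w| + d + 3)) hr0
      linarith
    have h5 : (r / 2) ^ 2 ≤ w ^ 2 := by
      rw [← sq_abs w]
      exact pow_le_pow_left₀ (by linarith) h4 2
    nlinarith
  refine ⟨hc, ?_⟩
  subst hc
  simp only [Int.cast_zero, zero_mul, sub_zero, add_zero] at hu hw hℓ
  have ha : |a| ≤ 2 * d := by
    rw [hu] at hu2
    exact_mod_cast hu2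
  have hb : |b| ≤ 2 * d := by
    have h1 : |(b : ℝ)| * r ≤ d * r + 2 * d := by
      calc |(b : ℝ)| * r = |ℓ - u| := by
            rw [hℓ, hu, add_sub_cancel_left, abs_mul, abs_of_pos hr0]
        _ ≤ |ℓ| + |u| := abs_sub _ _
        _ ≤ _ := by linarith
    have h2 : |(b : ℝ)| * r ≤ (2 * d) * r := by nlinarith
    exact_mod_cast le_of_mul_le_mul_right h2 hr0
  by_contra! hab
  have ha1 := Int.one_le_abs hab.1
  have hb1 := Int.one_le_abs hab.2
  have hN0 : 0 ≤ N := le_trans (by positivity) hN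
  have hbig : N ≤ |a ^ 2 * b * N| := by
    rw [abs_mul, abs_mul, abs_pow, abs_of_nonneg hN0]
    have : 1 ≤ |a| ^ 2 * |b| := one_le_mul_of_one_le_of_one_le (one_le_pow₀ ha1) hb1
    nlinarith
  have hsplit : a ^ 2 * b * N = normForm N y a b 0 - a ^ 3 + y * a * b ^ 2 - b ^ 3 := by
    unfold normForm; ring
  have hA3 : |a ^ 3| ≤ (2 * d) ^ 3 := by
    rw [abs_pow]; exact pow_le_pow_left₀ (abs_nonneg _) ha 3
  have hB3 : |b ^ 3| ≤ (2 * d) ^ 3 := by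
    rw [abs_pow]; exact pow_le_pow_left₀ (abs_nonneg _) hb 3
  have hAB : |y * a * b ^ 2| ≤ |y| * (2 * d) ^ 3 := by
    rw [abs_mul, abs_mul, abs_pow, mul_assoc]
    refine mul_le_mul_of_nonneg_left ?_ (abs_nonneg y)
    calc |a| * |b| ^ 2 ≤ (2 * d) * (2 * d) ^ 2 :=
          mul_le_mul ha (pow_le_pow_left₀ (abs_nonneg _) hb 2) (by positivity) (by linarith)
      _ = (2 * d) ^ 3 := by ring
  have htri : |normForm N y a b 0 - a ^ 3 + y * a * b ^ 2 - b ^ 3|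
      ≤ |normForm N y a b 0| + |a ^ 3| + |y * a * b ^ 2| + |b ^ 3| :=
    (abs_sub _ _).trans (add_le_add_left
      ((abs_add_le _ _).trans (add_le_add_left (abs_sub _ _) _)) _)
  rw [hsplit] at hbig
  have hd3pos : 1 ≤ d ^ 3 := one_le_pow₀ hd
  have hyd : 0 ≤ |y| * d ^ 3 := by positivity
  have hyyd : 0 ≤ |y| ^ 2 * d ^ 3 := by positivity
  nlinarith

theorem exists_zpow_mul_mem_fundamental_range {r x : ℝ} {d : ℤ} (hd : 1 ≤ d) (hr : 1 < r) (hx : x ≠ 0) :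
    ∃ k : ℤ, (d : ℝ) ≤ |r ^ k * x| ∧ |r ^ k * x| ≤ d * r := by
  have hd' : (0 : ℝ) < d := by exact_mod_cast hd
  have hr0 : 0 < r := by linarith
  obtain ⟨k, hk1, hk2⟩ := exists_mem_Ico_zpow (div_pos (abs_pos.mpr hx) hd') hr
  have hp : 0 < r ^ k := zpow_pos hr0 k
  refine ⟨-k, ?_⟩
  rw [abs_mul, zpow_neg, abs_of_pos (inv_pos.mpr hp), inv_mul_eq_div, le_div_iff₀ hp,
    div_le_iff₀ hp]
  rw [le_div_iff₀ hd'] at hk1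
  rw [div_lt_iff₀ hd', zpow_add_one₀ hr0.ne'] at hk2
  exact ⟨by linarith, by linarith⟩

theorem eq_zero_of_eq_add_mul {x z p k : ℤ} (hx : 0 ≤ x) (hxp : x < p) (hz : 0 ≤ z) (hzp : z < p)
    (h : x = z + k * p) : k = 0 := by
  have h1 : k < 1 := by
    by_contra! hk
    nlinarith
  have h2 : -1 < k := by
    by_contra! hk
    nlinarith
  omega

theorem eq_of_mul_eq_mul_of_isUnit {a b e₁ e₂ : ℤ} (ha : 0 < a) (hb : 0 < b) (h1 : IsUnit e₁)
    (h2 : IsUnit e₂) (h : a * e₁ = e₂ * b) : e₁ = e₂ ∧ a = b := by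
  rcases Int.isUnit_iff.mp h1 with rfl | rfl <;> rcases Int.isUnit_iff.mp h2 with rfl | rfl <;> omega

/-- An integer conjugation fixing the first basis vector up to sign relates no two distinct perfect
Hessenberg matrices. -/
theorem eq_of_perfect_of_fixes_first {A M Y : M3} (hA : IsPerfectHessenberg A)
    (hM : IsPerfectHessenberg M) (hY : IsUnit Y.det) (h : A * Y = Y * M)
    (h1 : Y 1 0 = 0) (h2 : Y 2 0 = 0) : M = A := by
  obtain ⟨a20, a00, a00', a01, a01', a11, a11'⟩ := hA
  obtain ⟨m20, m00, m00', m01, m01', m11, m11'⟩ := hM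
  have hent (i j : Fin 3) : A i 0 * Y 0 j + A i 1 * Y 1 j + A i 2 * Y 2 j
      = Y i 0 * M 0 j + Y i 1 * M 1 j + Y i 2 * M 2 j := by
    have := congrFun (congrFun h i) j
    rwa [Matrix.mul_apply, Matrix.mul_apply, Fin.sum_univ_three, Fin.sum_univ_three] at this
  have e00 := hent 0 0
  have e10 := hent 1 0
  have e20 := hent 2 0
  simp only [h1, h2, a20, m20, mul_zero, zero_mul, add_zero, zero_add] at e00 e10 e20
  have h21 : Y 2 1 = 0 := by
    rcases mul_eq_zero.mp e20.symm with h | h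
    · exact h
    · omega
  have hdet : Y.det = Y 0 0 * Y 1 1 * Y 2 2 := by
    rw [Matrix.det_fin_three, h1, h2, h21]; ring
  rw [hdet] at hY
  have hu2 : IsUnit (Y 2 2) := isUnit_of_mul_isUnit_right hY
  have hu1 : IsUnit (Y 1 1) := isUnit_of_mul_isUnit_right (isUnit_of_mul_isUnit_left hY)
  have hu0 : IsUnit (Y 0 0) := isUnit_of_mul_isUnit_left (isUnit_of_mul_isUnit_left hY)
  have hsq : Y 0 0 * Y 0 0 = 1 := Int.isUnit_mul_self hu0
  obtain ⟨h11, hm10⟩ := eq_of_mul_eq_mul_of_isUnit (by omega) (by omega) hu0 hu1 e10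
  have h01 : Y 0 0 * Y 0 1 = 0 :=
    eq_zero_of_eq_add_mul a00 (hm10 ▸ a00') m00 m00'
      (by linear_combination Y 0 0 * e00 - (A 0 0 - M 0 0) * hsq)
  have h01 : Y 0 1 = 0 := (mul_eq_zero.mp h01).resolve_left hu0.ne_zero
  have e01 := hent 0 1
  have e11 := hent 1 1
  have e21 := hent 2 1
  simp only [h1, h2, h01, h21, ← h11, a20, mul_zero, zero_mul, add_zero, zero_add] at e01 e11 e21
  obtain ⟨h22, hm21⟩ := eq_of_mul_eq_mul_of_isUnit (by omega) (by omega) hu0 hu2 e21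
  have h02 : Y 0 0 * Y 0 2 = 0 :=
    eq_zero_of_eq_add_mul a01 (hm21 ▸ a01') m01 m01'
      (by linear_combination Y 0 0 * e01 - (A 0 1 - M 0 1) * hsq)
  have h12 : Y 0 0 * Y 1 2 = 0 :=
    eq_zero_of_eq_add_mul a11 (hm21 ▸ a11') m11 m11'
      (by linear_combination Y 0 0 * e11 - (A 1 1 - M 1 1) * hsq)
  have h02 : Y 0 2 = 0 := (mul_eq_zero.mp h02).resolve_left hu0.ne_zero
  have h12 : Y 1 2 = 0 := (mul_eq_zero.mp h12).resolve_left hu0.ne_zero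
  have hYs : Y = Y 0 0 • (1 : M3) := by
    ext i j
    fin_cases i <;> fin_cases j <;> simp [h1, h2, h01, h21, h02, h12, ← h11, ← h22]
  rw [hYs, Matrix.mul_smul, Matrix.smul_mul, mul_one, one_mul] at h
  exact (smul_right_injective M3 hu0.ne_zero h).symm

/-- The negative of the sum of the principal `2 × 2` minors. -/
def minorSum (A : M3) : ℤ :=
  -(A 0 0 * A 1 1 - A 0 1 * A 1 0 + (A 0 0 * A 2 2 - A 0 2 * A 2 0)
    + (A 1 1 * A 2 2 - A 1 2 * A 2 1))

/-- The change of basis to `e₁, A e₁, A² e₁`, multiplied by `a21 * a32` to be integral. -/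
def toCyclic (A : M3) : M3 :=
  !![A 1 0 * A 2 1, -(A 0 0 * A 2 1), A 0 0 * A 1 1 - A 0 1 * A 1 0;
     0, A 2 1, -(A 0 0 + A 1 1);
     0, 0, 1]

theorem toCyclic_mul {A : M3} (hdet : A.det = 1) (h20 : A 2 0 = 0) :
    toCyclic A * A = companionMat A.trace (minorSum A) * toCyclic A := by
  rw [Matrix.det_fin_three, h20] at hdet
  ext i j
  fin_cases i <;> fin_cases j <;>
    simp [toCyclic, companionMat, minorSum, Matrix.mul_apply, Fin.sum_univ_three,
      Matrix.trace_fin_three, h20] <;>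
    first | linear_combination hdet | ring

theorem det_toCyclic (A : M3) : (toCyclic A).det = A 1 0 * A 2 1 * A 2 1 := by
  simp [toCyclic, Matrix.det_fin_three]

/-- The value at `r` of the polynomial whose coefficients form the first column of `P`. -/
def firstColEval (r : ℝ) (P : M3) : ℝ := P 0 0 + P 1 0 * r + P 2 0 * r ^ 2

theorem firstColEval_companionMat_mul {N y : ℤ} {r : ℝ} (hroot : r ^ 3 = N * r ^ 2 + y * r + 1)
    (P : M3) : firstColEval r (companionMat N y * P) = r * firstColEval r P := by
  simp [firstColEval, companionMat, Matrix.mul_apply, Fin.sum_univ_three]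
  linear_combination (-(P 2 0 : ℝ)) * hroot

theorem exists_conjugator_zpow {A M Y : M3} {r : ℝ} (hdet : A.det = 1) (h20 : A 2 0 = 0)
    (hr : r ≠ 0) (hroot : r ^ 3 = A.trace * r ^ 2 + minorSum A * r + 1)
    (hY : IsUnit Y.det) (h : A * Y = Y * M) (k : ℤ) :
    ∃ Y' : M3, IsUnit Y'.det ∧ A * Y' = Y' * M ∧
      firstColEval r (toCyclic A * Y') = r ^ k * firstColEval r (toCyclic A * Y) := by
  have hstep (Z : M3) :
      firstColEval r (toCyclic A * (A * Z)) = r * firstColEval r (toCyclic A * Z) := by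
    rw [← mul_assoc, toCyclic_mul hdet h20, mul_assoc, firstColEval_companionMat_mul hroot]
  have hAadj : A * A.adjugate = 1 := by rw [Matrix.mul_adjugate, hdet, one_smul]
  have hadjA : A.adjugate * A = 1 := by rw [Matrix.adjugate_mul, hdet, one_smul]
  induction k using Int.induction_on with
  | zero => exact ⟨Y, hY, h, by simp⟩
  | succ k ih =>
    obtain ⟨Z, hZ, hZM, hZe⟩ := ih
    refine ⟨A * Z, by rwa [Matrix.det_mul, hdet, one_mul], by rw [mul_assoc A Z M, ← hZM], ?_⟩
    rw [hstep, hZe, zpow_add_one₀ hr]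
    ring
  | pred k ih =>
    obtain ⟨Z, hZ, hZM, hZe⟩ := ih
    refine ⟨A.adjugate * Z, ?_, ?_, ?_⟩
    · rwa [Matrix.det_mul, Matrix.det_adjugate, hdet, one_pow, one_mul]
    · rw [mul_assoc A.adjugate Z M, ← hZM, ← mul_assoc, ← mul_assoc, hAadj, hadjA]
    · have := hstep (A.adjugate * Z)
      rw [← mul_assoc A, hAadj, one_mul, hZe] at this
      rw [zpow_sub_one₀ hr]
      field_simp
      linarith

theorem IntegerConjugate.exists_semiconj {A M : M3} (h : IntegerConjugate A M) :
    ∃ Y : M3, IsUnit Y.det ∧ A * Y = Y * M := by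
  obtain ⟨X, hX, rfl⟩ := h
  have hX' : IsUnit X.det := Int.isUnit_iff.mpr hX
  refine ⟨X⁻¹, by rwa [Matrix.isUnit_nonsing_inv_det_iff], ?_⟩
  rw [← mul_assoc, ← mul_assoc, Matrix.nonsing_inv_mul X hX', one_mul]

theorem IntegerConjugate.symm {A M : M3} (h : IntegerConjugate A M) : IntegerConjugate M A := by
  obtain ⟨X, hX, rfl⟩ := h
  have hX' : IsUnit X.det := Int.isUnit_iff.mpr hX
  refine ⟨X⁻¹, Int.isUnit_iff.mp (by rwa [Matrix.isUnit_nonsing_inv_det_iff]), ?_⟩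
  rw [Matrix.nonsing_inv_nonsing_inv X hX', mul_assoc X A, ← mul_assoc X⁻¹,
    Matrix.nonsing_inv_mul X hX', one_mul, mul_assoc, Matrix.nonsing_inv_mul X hX', mul_one]

/-- A perfect Hessenberg matrix of large trace is the only perfect Hessenberg matrix in its integer
conjugacy class whose complexity does not exceed its own. -/
theorem eq_of_integerConjugate_of_hessComplexity_le {A M : M3} (hdet : A.det = 1)
    (hA : IsPerfectHessenberg A)
    (hbound : 200 * (A 1 0 * A 2 1) ^ 3 * (|minorSum A| + 1) ^ 2 ≤ A.trace)
    (hM : IsPerfectHessenberg M) (hconj : IntegerConjugate A M)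
    (hle : HessComplexity M ≤ HessComplexity A) : M = A := by
  obtain ⟨Y₀, hY₀, hYM₀⟩ := hconj.exists_semiconj
  have ⟨a20, a00, a00', a01, a01', _, _⟩ := hA
  have ⟨m20, m00, m00', m01, m01', _, _⟩ := hM
  have h10 : 1 ≤ A 1 0 := by omega
  have h21 : 1 ≤ A 2 1 := by omega
  have hd : 1 ≤ A 1 0 * A 2 1 := one_le_mul_of_one_le_of_one_le h10 h21
  have hd3 : 1 ≤ (A 1 0 * A 2 1) ^ 3 := one_le_pow₀ hd
  have hK : 1 ≤ |minorSum A| + 1 := by linarith [abs_nonneg (minorSum A)]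
  have hK2 : |minorSum A| + 1 ≤ (|minorSum A| + 1) ^ 2 := by nlinarith
  have hN : 200 * (|minorSum A| + 1) ≤ A.trace := by
    refine le_trans ?_ hbound
    nlinarith [sq_nonneg (|minorSum A| + 1)]
  obtain ⟨r, hrN, -, hroot⟩ := exists_real_root (N := A.trace) (y := minorSum A) (by linarith)
  have hr1 : 1 < r := by
    have : ((200 * (|minorSum A| + 1) : ℤ) : ℝ) ≤ A.trace := by exact_mod_cast hN
    have : (1 : ℝ) ≤ ((|minorSum A| + 1 : ℤ) : ℝ) := by exact_mod_cast hK
    push_cast at *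
    linarith
  have hnorm (Y : M3) (hYM : A * Y = Y * M) :
      normForm A.trace (minorSum A) ((toCyclic A * Y) 0 0) ((toCyclic A * Y) 1 0)
        ((toCyclic A * Y) 2 0) = A 1 0 * A 2 1 * A 2 1 * Y.det * HessComplexity M := by
    rw [normForm_eq_det_mul_hessComplexity m20, Matrix.det_mul, det_toCyclic]
    rw [← mul_assoc, ← toCyclic_mul hdet a20, mul_assoc, hYM, mul_assoc]
  have hMpos : 0 < HessComplexity M := by
    have : 0 < M 1 0 := by omega
    have : 0 < M 2 1 := by omega
    unfold HessComplexity
    positivity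
  have hne : firstColEval r (toCyclic A * Y₀) ≠ 0 := by
    intro h0
    have hr0 : r ≠ 0 := by linarith
    have hmul := normForm_eq_mul (N := A.trace) (y := minorSum A) (r := r) (s := A.trace - r)
      (q := r⁻¹) (by ring) (inv_mul_cancel₀ hr0)
      (by field_simp; linear_combination hroot) ((toCyclic A * Y₀) 0 0) ((toCyclic A * Y₀) 1 0)
      ((toCyclic A * Y₀) 2 0)
    rw [hnorm Y₀ hYM₀] at hmul
    unfold firstColEval at h0
    rw [h0, zero_mul] at hmul
    have hz : A 1 0 * A 2 1 * A 2 1 * Y₀.det * HessComplexity M = 0 := by exact_mod_cast hmul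
    have := hY₀.ne_zero
    simp only [mul_eq_zero] at hz
    omega
  obtain ⟨k, hk1, hk2⟩ := exists_zpow_mul_mem_fundamental_range hd hr1 hne
  obtain ⟨Y, hY, hYM, hYe⟩ := exists_conjugator_zpow hdet a20 (by linarith) hroot hY₀ hYM₀ k
  rw [← hYe] at hk1 hk2
  have hle3 : |normForm A.trace (minorSum A) ((toCyclic A * Y) 0 0) ((toCyclic A * Y) 1 0)
      ((toCyclic A * Y) 2 0)| ≤ (A 1 0 * A 2 1) ^ 3 := by
    have hpos : 0 ≤ A 1 0 * A 2 1 * A 2 1 := by positivity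
    rw [hnorm Y hYM, abs_mul, abs_mul, Int.isUnit_iff_abs_eq.mp hY, mul_one, abs_of_pos hMpos,
      abs_of_nonneg hpos]
    calc _ ≤ A 1 0 * A 2 1 * A 2 1 * HessComplexity A := mul_le_mul_of_nonneg_left hle hpos
      _ = _ := by unfold HessComplexity; ring
  obtain ⟨hc, hab⟩ := coords_of_normForm_le hd hroot hrN hbound hle3 hk1 hk2
  simp [toCyclic, Matrix.mul_apply, Fin.sum_univ_three] at hc hab
  simp only [hc, mul_zero, add_zero] at hab
  rcases hab with ha | hb
  · have hA2 : A * A.adjugate = 1 := by rw [Matrix.mul_adjugate, hdet, one_smul]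
    have hadjA : A.adjugate * A = 1 := by rw [Matrix.adjugate_mul, hdet, one_smul]
    have hprop : A 1 0 * Y 0 0 = A 0 0 * Y 1 0 := by
      have : A 2 1 * (A 1 0 * Y 0 0) = A 2 1 * (A 0 0 * Y 1 0) := by linear_combination ha
      exact mul_left_cancel₀ (by omega) this
    refine eq_of_perfect_of_fixes_first (Y := A.adjugate * Y) hA hM ?_ ?_ ?_ ?_
    · rwa [Matrix.det_mul, Matrix.det_adjugate, hdet, one_pow, one_mul]
    · rw [mul_assoc A.adjugate Y M, ← hYM, ← mul_assoc, ← mul_assoc, hA2, hadjA]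
    · simp [Matrix.adjugate_fin_three, Matrix.mul_apply, Fin.sum_univ_three, hc, a20]
      linear_combination (-(A 2 2)) * hprop
    · simp [Matrix.adjugate_fin_three, Matrix.mul_apply, Fin.sum_univ_three, hc, a20]
      linear_combination A 2 1 * hprop
  · refine eq_of_perfect_of_fixes_first hA hM hY hYM ?_ hc
    exact (mul_eq_zero.mp hb).resolve_left (by omega)

/-- Along any NRS-ray of direction (a11,a21), eventually every matrix of the ray
has exactly one integer conjugate ς-reduced matrix. -/
theorem asymptotic_sigma_uniqueness_dir_a11_a21
    (a11 a12 a13 a21 a22 a23 a32 a33 m n : ℤ)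
    (hdet : (Hmat a11 a12 a13 a21 a22 a23 a32 a33 0 0).det = 1)
    (h11 : 0 ≤ a11) (h1121 : a11 < a21)
    (h12 : 0 ≤ a12) (h1232 : a12 < a32)
    (h22 : 0 ≤ a22) (h2232 : a22 < a32)
    (hray : ∀ t : ℤ, 0 ≤ t →
      Irreducible
        ((Hmat a11 a12 a13 a21 a22 a23 a32 a33 (m + a11 * t) (n + a21 * t)).charpoly.map
          (Int.castRingHom ℚ)) ∧
      ∃ z : ℂ, z.im ≠ 0 ∧
        Polynomial.aeval z
          (Hmat a11 a12 a13 a21 a22 a23 a32 a33 (m + a11 * t) (n + a21 * t)).charpoly = 0) :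
    ∃ T : ℤ, ∀ t : ℤ, T < t →
      ∃! M' : M3,
        IntegerConjugate (Hmat a11 a12 a13 a21 a22 a23 a32 a33 (m + a11 * t) (n + a21 * t)) M' ∧
        SigmaReduced M' := by
  have h21 : 1 ≤ a21 := by omega
  have h32 : 1 ≤ a32 := by omega
  obtain ⟨N₀, hN₀⟩ : ∃ N₀ : ℤ, N₀ = a11 + a22 + (a32 * n + a33) := ⟨_, rfl⟩
  obtain ⟨y, hy⟩ : ∃ y : ℤ, y = minorSum (Hmat a11 a12 a13 a21 a22 a23 a32 a33 m n) := ⟨_, rfl⟩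
  refine ⟨200 * (a21 * a32) ^ 3 * (|y| + 1) ^ 2 + |N₀|, fun t ht => ?_⟩
  set H : M3 := Hmat a11 a12 a13 a21 a22 a23 a32 a33 (m + a11 * t) (n + a21 * t) with hH
  have hHdet : H.det = 1 := by
    rw [← hdet, hH]
    simp only [Hmat, Matrix.det_fin_three]
    simp
    ring
  have hHperf : IsPerfectHessenberg H := by
    simp [Hmat, IsPerfectHessenberg, *]
  have hHy : minorSum H = y := by
    rw [hy, hH]
    simp [minorSum, Hmat]
    ring
  have hHtr : H.trace = N₀ + a21 * a32 * t := by
    rw [hN₀, hH]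
    simp [Hmat, Matrix.trace_fin_three]
    ring
  have hd : 1 ≤ a21 * a32 := one_le_mul_of_one_le_of_one_le h21 h32
  have hbound : 200 * (H 1 0 * H 2 1) ^ 3 * (|minorSum H| + 1) ^ 2 ≤ H.trace := by
    have e1 : H 1 0 = a21 := rfl
    have e2 : H 2 1 = a32 := rfl
    rw [hHy, hHtr, e1, e2]
    have hpos : 0 ≤ 200 * (a21 * a32) ^ 3 * (|y| + 1) ^ 2 := by positivity
    nlinarith [neg_abs_le N₀, abs_nonneg N₀]
  have hrefl : IntegerConjugate H H := ⟨1, by simp, by simp⟩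
  refine ⟨H, ⟨hrefl, hHdet, hHperf, fun M' _ hM' hconj => ?_⟩, ?_⟩
  · by_contra! hlt
    rw [eq_of_integerConjugate_of_hessComplexity_le hHdet hHperf hbound hM' hconj hlt.le] at hlt
    exact lt_irrefl _ hlt
  · rintro M' ⟨hconj, -, hM', hmin⟩
    exact eq_of_integerConjugate_of_hessComplexity_le hHdet hHperf hbound hM' hconj
      (hmin H hHdet hHperf hconj.symm)
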